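/- Proposition 3.5 (3-reflective billiards on lines are right-spherical). Let (a₁,v₁), (a₂,v₂), (a₃,v₃) be a 3-reflective triple of complex analytic line-framed curves in ℂ² such that each image aᵢ(Uᵢ) is contained in a complex affine line ℓᵢ, and the three lines ℓ₁, ℓ₂, ℓ₃ are pairwise distinct. Then the triple is right-spherical: there exist linearly independent vectors p, q, r ∈ ℂ³ such that for every s ∈ U₁, (a₁(s),1) ∈ span{p,q} and r ∈ span{(a₁(s),1),(v₁(s),0)}; for every u ∈ U₂, (a₂(u),1) ∈ span{q,r} and p ∈ span{(a₂(u),1),(v₂(u),0)}; and for every t ∈ U₃, (a₃(t),1) ∈ span{r,p} and q ∈ span{(a₃(t),1),(v₃(t),0)}. In particular the three lines are not concurrent in the projective plane. -/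

import Mathlib

/-- Two nonzero vectors `u`, `w` of the plane are symmetric with respect to the pair
`(v, τ)` (field direction, tangent direction): there are nonzero scalars `p`, `q` with
`p • u + q • w` on the line spanned by `τ` and `p • u - q • w` on the line spanned by `v`. -/
def PlaneSym (𝕜 : Type*) [Field 𝕜] (v τ u w : 𝕜 × 𝕜) : Prop :=
  ∃ p q : 𝕜, p ≠ 0 ∧ q ≠ 0 ∧ p • u + q • w ∈ Submodule.span 𝕜 {τ} ∧
    p • u - q • w ∈ Submodule.span 𝕜 {v}

/-- Lift of a point of the plane to homogeneous coordinates: `x ↦ (x, 1)`. -/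
def liftPt (𝕜 : Type*) [Field 𝕜] (x : 𝕜 × 𝕜) : 𝕜 × 𝕜 × 𝕜 := (x.1, x.2, 1)

/-- Lift of a direction of the plane to homogeneous coordinates: `x ↦ (x, 0)`. -/
def liftDir (𝕜 : Type*) [Field 𝕜] (x : 𝕜 × 𝕜) : 𝕜 × 𝕜 × 𝕜 := (x.1, x.2, 0)

/-- The affine line through `x` with direction `w`. -/
def lineThru (𝕜 : Type*) [Field 𝕜] (x w : 𝕜 × 𝕜) : Set (𝕜 × 𝕜) :=
  {y | ∃ c : 𝕜, y = x + c • w}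

/-!
In homogeneous coordinates, with border line `n = 0`, the reflection law at `A` says that the field
line is the midpoint of the two sides in any affine coordinate of the pencil through `A` that is
infinite on the border.

If the three borders were concurrent, suitable coordinates `x`, `y`, `z` on them would make each of
`z + x - y`, `x + y - z`, `y + z - x` a function of a single vertex. The first two then force
`z - x - y` to be constant, and moving along `x + y = const` fixes `z` but also `y`, a
contradiction.

Hence the borders are the sides of a triangle. Let `x`, `y`, `z` be the ratios in which the vertices
of an orbit divide these sides. The reflection law gives `1 - x y z = y m(x) = z k(y)`, and
separating variables forces `x y z = 1`. Then `m = 0`, which says that the field line passes through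
the opposite vertex of the triangle. This holds on an open set of vertices, hence on each whole
curve by the identity theorem.
-/

open Filter Module Topology

section DualFrames

variable {ι K V : Type*} [Field K] [AddCommGroup V] [Module K V]

theorem exists_basis_coord_eq [Fintype ι] [FiniteDimensional K V] {n : ι → Dual K V}
    (hn : LinearIndependent K n) (hcard : Fintype.card ι = finrank K V) :
    ∃ b : Basis ι K V, ∀ i, b.coord i = n i := by
  classical
  let b' : Basis ι K (Dual K V) :=
    Basis.mk hn (hn.span_eq_top_of_card_eq_finrank' (by rw [hcard, Subspace.dual_finrank_eq])).ge
  refine ⟨b'.dualBasis.map (evalEquiv K V).symm, fun i => ?_⟩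
  ext v
  simp [b']

theorem exists_dual_joint_ker_eq_zero [FiniteDimensional K V] {k : ℕ} {n : Fin k → Dual K V}
    (hn : LinearIndependent K n) (hk : k + 1 = finrank K V) :
    ∃ m : Dual K V, ∀ X, (∀ i, n i X = 0) → m X = 0 → X = 0 := by
  obtain ⟨m, hm⟩ := exists_linearIndependent_snoc_of_lt_finrank hn
    (by rw [Subspace.dual_finrank_eq]; omega)
  obtain ⟨b, hb⟩ := exists_basis_coord_eq hm (by simpa using hk)
  refine ⟨m, fun X hX hmX => b.forall_coord_eq_zero_iff.1 fun i => ?_⟩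
  rw [hb]
  induction i using Fin.lastCases <;> simp [hX, hmX]

theorem mem_span_pair_of_coord_eq_zero (b : Basis (Fin 3) K V) {i : Fin 3} {v : V}
    (h : b.coord i v = 0) : v ∈ Submodule.span K {b (i + 1), b (i + 2)} := by
  refine Submodule.mem_span_pair.2 ⟨b.coord (i + 1) v, b.coord (i + 2) v, ?_⟩
  have hv := b.sum_repr v
  rw [← Equiv.sum_comp (Equiv.addLeft i), Fin.sum_univ_three] at hv
  rw [Basis.coord_apply] at h
  simpa [h] using hv

theorem mem_span_pair_of_coord_mul_eq (b : Basis ι K V) {i : ι} {A F : V}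
    (hA : A ≠ 0) (hiA : b.coord i A = 0) (hiF : b.coord i F ≠ 0)
    (h : ∀ j k, j ≠ i → k ≠ i → b.coord j A * b.coord k F = b.coord k A * b.coord j F) :
    b i ∈ Submodule.span K {A, F} := by
  classical
  obtain ⟨j, hjA⟩ : ∃ j, b.coord j A ≠ 0 := by
    by_contra! h0
    exact hA (b.forall_coord_eq_zero_iff.1 h0)
  have hji : j ≠ i := by rintro rfl; exact hjA hiA
  have key : b.coord j A • F - b.coord j F • A = (b.coord j A * b.coord i F) • b i := by
    refine b.ext_elem fun k => ?_
    rcases eq_or_ne k i with rfl | hk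
    · simpa using Or.inr hiA
    · simpa [Finsupp.single_apply, hk.symm, sub_eq_zero, mul_comm] using h j k hji hk
  rw [← Submodule.smul_mem_iff _ (mul_ne_zero hjA hiF), ← key]
  exact sub_mem (Submodule.smul_mem _ _ (Submodule.mem_span_of_mem (by simp)))
    (Submodule.smul_mem _ _ (Submodule.mem_span_of_mem (by simp)))

end DualFrames

section Reflection

variable {K V : Type*} [Field K] [AddCommGroup V] [Module K V]

/-- The coordinate of the line `AX` in the pencil of lines through `A`, normalized so that it is
infinite on the line `n = 0` and zero on the line joining `A` to the point `p = q = 0`. -/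
def pencilSlope (n p q : Dual K V) (A X : V) : K :=
  (q X - q A / p A * p X) / n X

/-- The projective reflection law, in homogeneous coordinates: the lines `AB` and `AC` are
harmonic with respect to the border `n = 0` and the field line `AF`. In an affine coordinate
`e / n` of the pencil through `A` that is infinite on the border, the field line is the midpoint of
the two other lines. -/
structure HarmonicAt (n : Dual K V) (A F B C : V) : Prop where
  vertex_mem : n A = 0
  field_ne : n F ≠ 0
  left_ne : n B ≠ 0
  right_ne : n C ≠ 0
  law : ∀ e : Dual K V, e A = 0 → e B / n B + e C / n C = 2 * (e F / n F)

theorem HarmonicAt.symm {n : Dual K V} {A F B C : V} (h : HarmonicAt n A F B C) :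
    HarmonicAt n A F C B :=
  ⟨h.vertex_mem, h.field_ne, h.right_ne, h.left_ne, fun e he => by rw [add_comm, h.law e he]⟩

theorem HarmonicAt.pencilSlope_add {n p q : Dual K V} {A F B C : V} (h : HarmonicAt n A F B C)
    (hp : p A ≠ 0) :
    pencilSlope n p q A B + pencilSlope n p q A C = 2 * pencilSlope n p q A F := by
  simpa [pencilSlope] using h.law (q - (q A / p A) • p) (by simp [hp])

/-- A triangle `ABC` inscribed in the three lines `nᵢ = 0` and satisfying the reflection law at its
three vertices, for the field directions `F`, `G`, `H` at `A`, `B`, `C`. -/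
structure ReflectiveTriangle (n₁ n₂ n₃ : Dual K V) (A F B G C H : V) : Prop where
  fst : HarmonicAt n₁ A F B C
  snd : HarmonicAt n₂ B G C A
  trd : HarmonicAt n₃ C H A B

/-- The product of the ratios in which the vertices of an inscribed triangle divide the sides of
the triangle with sides `nᵢ = 0`, as in Ceva's theorem. -/
def cevaProduct (n₁ n₂ n₃ : Dual K V) (A B C : V) : K :=
  n₃ A / n₂ A * (n₁ B / n₃ B) * (n₂ C / n₁ C)

namespace ReflectiveTriangle

variable {n₁ n₂ n₃ : Dual K V} {A F B G C H : V}

theorem rotate (h : ReflectiveTriangle n₁ n₂ n₃ A F B G C H) :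
    ReflectiveTriangle n₂ n₃ n₁ B G C H A F :=
  ⟨h.snd, h.trd, h.fst⟩

theorem one_sub_cevaProduct (h : ReflectiveTriangle n₁ n₂ n₃ A F B G C H) :
    1 - cevaProduct n₁ n₂ n₃ A B C = n₁ B / n₃ B * (2 * pencilSlope n₁ n₂ n₃ A F) := by
  rw [← h.fst.pencilSlope_add h.snd.right_ne]
  have h1B := h.fst.left_ne
  have h1C := h.fst.right_ne
  have h3B := h.trd.right_ne
  have h2A := h.snd.right_ne
  simp only [cevaProduct, pencilSlope, h.snd.vertex_mem, h.trd.vertex_mem]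
  field_simp
  ring

theorem cevaProduct_rotate : cevaProduct n₂ n₃ n₁ B C A = cevaProduct n₁ n₂ n₃ A B C := by
  simp only [cevaProduct]
  ring

theorem mul_eq_mul_of_cevaProduct_eq_one [NeZero (2 : K)]
    (h : ReflectiveTriangle n₁ n₂ n₃ A F B G C H) (hc : cevaProduct n₁ n₂ n₃ A B C = 1) :
    n₂ A * n₃ F = n₃ A * n₂ F := by
  have hslope : pencilSlope n₁ n₂ n₃ A F = 0 := by
    simpa [hc, h.fst.left_ne, h.trd.right_ne, two_ne_zero] using h.one_sub_cevaProduct.symm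
  have h2A := h.snd.right_ne
  have hnum : n₃ F - n₃ A / n₂ A * n₂ F = 0 :=
    (div_eq_zero_iff.1 hslope).resolve_right h.fst.field_ne
  field_simp at hnum
  linear_combination hnum

theorem linearIndependent_pair (h : ReflectiveTriangle n₁ n₂ n₃ A F B G C H) :
    LinearIndependent K ![n₁, n₂] := by
  refine LinearIndependent.pair_iff.2 fun s t hst => ⟨?_, ?_⟩
  · simpa [h.snd.vertex_mem, h.fst.left_ne] using LinearMap.congr_fun hst B
  · simpa [h.fst.vertex_mem, h.snd.right_ne] using LinearMap.congr_fun hst A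

theorem exists_dual_joint_kers_eq_zero [FiniteDimensional K V]
    (h : ReflectiveTriangle n₁ n₂ n₃ A F B G C H) (hV : finrank K V = 3) {c₁ c₂ c₃ : K}
    (h₁ : c₁ ≠ 0) (h₂ : c₂ ≠ 0) (hrel : ∀ X, c₁ * n₁ X + c₂ * n₂ X + c₃ * n₃ X = 0) :
    ∃ m : Dual K V, (∀ X, n₁ X = 0 → n₂ X = 0 → m X = 0 → X = 0) ∧
      (∀ X, n₂ X = 0 → n₃ X = 0 → m X = 0 → X = 0) ∧
      (∀ X, n₃ X = 0 → n₁ X = 0 → m X = 0 → X = 0) := by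
  obtain ⟨m, hm⟩ := exists_dual_joint_ker_eq_zero h.linearIndependent_pair hV.symm
  have hm₁₂ : ∀ X, n₁ X = 0 → n₂ X = 0 → m X = 0 → X = 0 := fun X hX₁ hX₂ =>
    hm X (Fin.forall_fin_two.2 ⟨hX₁, hX₂⟩)
  refine ⟨m, hm₁₂, fun X hX₂ hX₃ => hm₁₂ X ?_ hX₂, fun X hX₃ hX₁ => hm₁₂ X hX₁ ?_⟩
  · simpa [hX₂, hX₃, h₁] using hrel X
  · simpa [hX₁, hX₃, h₂] using hrel X

theorem exists_relation (h : ReflectiveTriangle n₁ n₂ n₃ A F B G C H)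
    (hn : ¬ LinearIndependent K ![n₁, n₂, n₃]) :
    ∃ c₁ c₂ c₃ : K, c₁ ≠ 0 ∧ c₂ ≠ 0 ∧ c₃ ≠ 0 ∧
      ∀ X, c₁ * n₁ X + c₂ * n₂ X + c₃ * n₃ X = 0 := by
  obtain ⟨c, hc, i, hi⟩ := Fintype.not_linearIndependent_iff.1 hn
  have hrel : ∀ X, c 0 * n₁ X + c 1 * n₂ X + c 2 * n₃ X = 0 := fun X => by
    simpa [Fin.sum_univ_three] using LinearMap.congr_fun hc X
  have hA : c 1 = 0 ↔ c 2 = 0 := by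
    have := hrel A
    rw [h.fst.vertex_mem] at this
    constructor <;> intro h0 <;> simpa [h0, h.snd.right_ne, h.trd.left_ne] using this
  have hB : c 0 = 0 ↔ c 2 = 0 := by
    have := hrel B
    rw [h.snd.vertex_mem] at this
    constructor <;> intro h0 <;> simpa [h0, h.fst.left_ne, h.trd.right_ne] using this
  refine ⟨c 0, c 1, c 2, ?_, ?_, ?_, hrel⟩ <;> intro h0 <;> fin_cases i <;> simp_all

theorem sum_of_relation (h : ReflectiveTriangle n₁ n₂ n₃ A F B G C H) (m : Dual K V)
    {c₁ c₂ c₃ : K} (h₁ : c₁ ≠ 0) (h₂ : c₂ ≠ 0) (h₃ : c₃ ≠ 0)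
    (hrel : ∀ X, c₁ * n₁ X + c₂ * n₂ X + c₃ * n₃ X = 0) :
    m C / (c₁ * n₁ C) + m A / (c₂ * n₂ A) - m B / (c₃ * n₃ B) =
      2 * pencilSlope n₁ n₂ m A F / c₁ := by
  rw [← h.fst.pencilSlope_add h.snd.right_ne]
  have h1C := h.fst.right_ne
  have h2A := h.snd.right_ne
  have h3B := h.trd.right_ne
  have hB : n₁ B = -(c₃ * n₃ B) / c₁ := by
    rw [eq_div_iff h₁]
    linear_combination hrel B - c₂ * h.snd.vertex_mem
  have hC : n₂ C = -(c₁ * n₁ C) / c₂ := by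
    rw [eq_div_iff h₂]
    linear_combination hrel C - c₃ * h.trd.vertex_mem
  simp only [pencilSlope, h.snd.vertex_mem, hB, hC]
  field_simp
  ring

end ReflectiveTriangle

end Reflection

section FunctionalEquations

/-- The two equations give `y² / k = 1 / (x m) - y / x`, whose left-hand side depends on `j` only;
comparing the four pairs of indices yields `(y₁ - y₂) (1 / x₁ - 1 / x₂) = 0`. -/
theorem mul_mul_eq_one_of_separated {ι κ K : Type*} [Field K] {x m : ι → K} {y k : κ → K}
    {z : ι → κ → K} (hx : ∀ i, x i ≠ 0) (hy : ∀ j, y j ≠ 0) (hz : ∀ i j, z i j ≠ 0)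
    (hm : ∀ i j, 1 - x i * y j * z i j = y j * m i)
    (hk : ∀ i j, 1 - x i * y j * z i j = z i j * k j)
    {i i' : ι} (hi : x i' ≠ x i) {j j' : κ} (hj : y j' ≠ y j) : x i * y j * z i j = 1 := by
  by_contra hne
  have hmk : ∀ i j, y j * m i = z i j * k j := fun i j => (hm i j).symm.trans (hk i j)
  have hmi : m i ≠ 0 := by
    intro h0
    exact hne (by linear_combination -hm i j - y j * h0)
  have hk_ne : ∀ l, k l ≠ 0 := fun l hl => by simpa [hl, hy, hmi] using hmk i l
  have hm_ne : ∀ l, m l ≠ 0 := fun l hl => by simpa [hl, hz, hk_ne] using hmk l j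
  have sep : ∀ i j, y j ^ 2 / k j = 1 / (x i * m i) - y j / x i := by
    intro i j
    have := hx i
    have := hm_ne i
    have := hk_ne j
    field_simp
    linear_combination -k j * hm i j + x i * y j * hmk i j
  have : (y j' - y j) * (1 / x i - 1 / x i') = 0 := by
    linear_combination sep i j' - sep i j + sep i' j - sep i' j'
  rcases mul_eq_zero.1 this with h | h
  · exact hj (sub_eq_zero.1 h)
  · exact hi (by simpa using (sub_eq_zero.1 h).symm)

theorem eventually_eq_of_eventually_eq_fst_of_eventually_eq_snd {α β γ : Type*}
    [TopologicalSpace α] [TopologicalSpace β] {f : α × β → γ} {a : α → γ} {b : β → γ}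
    {p₀ : α × β} (ha : ∀ᶠ p in 𝓝 p₀, f p = a p.1) (hb : ∀ᶠ p in 𝓝 p₀, f p = b p.2) :
    ∀ᶠ p in 𝓝 p₀, f p = f p₀ := by
  have hproj : Tendsto (fun p : α × β => (p.1, p₀.2)) (𝓝 p₀) (𝓝 p₀) :=
    Continuous.tendsto' (by fun_prop) _ _ rfl
  filter_upwards [ha, hproj.eventually ha, hproj.eventually hb] with p h₁ h₂ h₃
  rw [h₁, ← h₂, h₃, hb.self_of_nhds]

variable {𝕜 : Type*} [NontriviallyNormedField 𝕜] [CompleteSpace 𝕜]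

/-- The first two equations make `z - x - y` constant, so along the curve `x + y = const` the
value of `g`, and with it `y - x`, is constant: `y` cannot move. -/
theorem false_of_separated_sums [NeZero (2 : 𝕜)] {x y z φ ψ χ : 𝕜 → 𝕜} {g : 𝕜 × 𝕜 → 𝕜}
    {p₀ : 𝕜 × 𝕜} {dx dy dz : 𝕜} (hx : HasStrictDerivAt x dx p₀.1) (hdx : dx ≠ 0)
    (hy : HasStrictDerivAt y dy p₀.2) (hdy : dy ≠ 0)
    (hz : HasStrictDerivAt z dz (g p₀)) (hdz : dz ≠ 0) (hg : ContinuousAt g p₀)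
    (hφ : ∀ᶠ p in 𝓝 p₀, z (g p) + x p.1 - y p.2 = φ p.1)
    (hψ : ∀ᶠ p in 𝓝 p₀, x p.1 + y p.2 - z (g p) = ψ p.2)
    (hχ : ∀ᶠ p in 𝓝 p₀, y p.2 + z (g p) - x p.1 = χ (g p)) : False := by
  have hsum : ∀ᶠ p in 𝓝 p₀, z (g p) - x p.1 - y p.2 = z (g p₀) - x p₀.1 - y p₀.2 :=
    eventually_eq_of_eventually_eq_fst_of_eventually_eq_snd
      (f := fun p => z (g p) - x p.1 - y p.2) (a := fun s => φ s - 2 * x s) (b := fun u => -ψ u)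
      (hφ.mono fun p h => by linear_combination h) (hψ.mono fun p h => by linear_combination -h)
  let σ : 𝕜 → 𝕜 := fun u => hx.localInverse x dx p₀.1 hdx (x p₀.1 + y p₀.2 - y u)
  have htarget : Tendsto (fun u => x p₀.1 + y p₀.2 - y u) (𝓝 p₀.2) (𝓝 (x p₀.1)) := by
    simpa using hy.hasDerivAt.continuousAt.const_sub (x p₀.1 + y p₀.2)
  have hσx : ∀ᶠ u in 𝓝 p₀.2, x (σ u) = x p₀.1 + y p₀.2 - y u :=
    htarget.eventually (hx.eventually_right_inverse hdx)
  have hσ : Tendsto σ (𝓝 p₀.2) (𝓝 p₀.1) := by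
    have := (hx.to_localInverse hdx).hasDerivAt.continuousAt.tendsto.comp htarget
    rwa [(hx.eventually_left_inverse hdx).self_of_nhds] at this
  have hcurve : Tendsto (fun u => (σ u, u)) (𝓝 p₀.2) (𝓝 p₀) := hσ.prodMk_nhds tendsto_id
  have hz_inj : ∀ᶠ p in 𝓝 p₀, z (g p) = z (g p₀) → g p = g p₀ := by
    filter_upwards [hg.eventually (hz.eventually_left_inverse hdz)] with p hp hzp
    rw [← hp, hzp, (hz.eventually_left_inverse hdz).self_of_nhds]
  have hy_const : ∀ᶠ u in 𝓝 p₀.2, y u = y p₀.2 := by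
    filter_upwards [hσx, hcurve.eventually hsum, hcurve.eventually hz_inj,
      hcurve.eventually hχ] with u hxu hsum_u hinj_u hχ_u
    have hzu : z (g (σ u, u)) = z (g p₀) := by linear_combination hsum_u + hxu
    rw [hinj_u hzu, ← hχ.self_of_nhds] at hχ_u
    exact mul_left_cancel₀ two_ne_zero (by linear_combination hχ_u + hxu)
  obtain ⟨u, hne, heq⟩ :=
    ((hy.hasDerivAt.eventually_ne hdy).and (hy_const.filter_mono nhdsWithin_le_nhds)).exists
  exact hne heq

end FunctionalEquations

section Curves

variable {𝕜 V : Type*} [NontriviallyNormedField 𝕜] [CompleteSpace 𝕜] [NormedAddCommGroup V]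
  [NormedSpace 𝕜 V]

theorem hasStrictDerivAt_dual_apply [FiniteDimensional 𝕜 V] {f : 𝕜 → V} {f' : V} {s : 𝕜}
    (hf : HasStrictDerivAt f f' s) (n : Dual 𝕜 V) :
    HasStrictDerivAt (fun s => n (f s)) (n f') s :=
  n.toContinuousLinearMap.hasStrictFDerivAt.comp_hasStrictDerivAt s hf

theorem analyticOnNhd_dual_apply [FiniteDimensional 𝕜 V] {f : 𝕜 → V} {U : Set 𝕜}
    (hf : AnalyticOnNhd 𝕜 f U) (n : Dual 𝕜 V) : AnalyticOnNhd 𝕜 (fun s => n (f s)) U :=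
  n.toContinuousLinearMap.comp_analyticOnNhd hf

theorem dual_apply_deriv_eq_zero [FiniteDimensional 𝕜 V] {n : Dual 𝕜 V} {f : 𝕜 → V} {U : Set 𝕜}
    (hU : IsOpen U) (hf : AnalyticOnNhd 𝕜 f U) (hn : ∀ s ∈ U, n (f s) = 0) {s : 𝕜} (hs : s ∈ U) :
    n (deriv f s) = 0 := by
  have hzero : (fun s => n (f s)) =ᶠ[𝓝 s] fun _ => 0 := (hU.eventually_mem hs).mono hn
  rw [← (hasStrictDerivAt_dual_apply (hf s hs).hasStrictDerivAt n).hasDerivAt.deriv,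
    hzero.deriv_eq, deriv_const]

/-- A line-framed curve in homogeneous coordinates: an immersed analytic curve `A` in the projective
line `n = 0`, with an analytic field of directions represented by points `F` off that line. -/
structure IsFramedLineCurve (n : Dual 𝕜 V) (A F : 𝕜 → V) (U : Set 𝕜) : Prop where
  isOpen : IsOpen U
  analytic : AnalyticOnNhd 𝕜 A U
  analytic_field : AnalyticOnNhd 𝕜 F U
  mem_line : ∀ s ∈ U, n (A s) = 0
  field_ne : ∀ s ∈ U, n (F s) ≠ 0
  immersed : ∀ s ∈ U, LinearIndependent 𝕜 ![A s, deriv A s]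

namespace IsFramedLineCurve

variable {n : Dual 𝕜 V} {A F : 𝕜 → V} {U : Set 𝕜} [FiniteDimensional 𝕜 V]

theorem exists_hasStrictDerivAt_div (h : IsFramedLineCurve n A F U) {p q : Dual 𝕜 V}
    (hker : ∀ X, n X = 0 → p X = 0 → q X = 0 → X = 0) {s : 𝕜} (hs : s ∈ U) (hq : q (A s) ≠ 0) :
    ∃ d ≠ 0, HasStrictDerivAt (fun s => p (A s) / q (A s)) d s := by
  have hA := (h.analytic s hs).hasStrictDerivAt
  refine ⟨_, ?_, (hasStrictDerivAt_dual_apply hA p).fun_div (hasStrictDerivAt_dual_apply hA q) hq⟩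
  refine div_ne_zero (fun h0 => ?_) (pow_ne_zero 2 hq)
  have hcomb : -q (deriv A s) • A s + q (A s) • deriv A s = 0 := by
    apply hker
    · simp [h.mem_line s hs, dual_apply_deriv_eq_zero h.isOpen h.analytic h.mem_line hs]
    · simp only [map_add, map_smul, smul_eq_mul]
      linear_combination h0
    · simp only [map_add, map_smul, smul_eq_mul]
      ring
  exact hq (LinearIndependent.pair_iff.1 (h.immersed s hs) _ _ hcomb).2

theorem mem_span_of_frequently {b : Basis (Fin 3) 𝕜 V} {i : Fin 3}
    (h : IsFramedLineCurve (b.coord i) A F U) (hU : IsPreconnected U) {s₀ : 𝕜} (hs₀ : s₀ ∈ U)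
    (hfreq : ∃ᶠ s in 𝓝[≠] s₀,
      b.coord (i + 1) (A s) * b.coord (i + 2) (F s) =
        b.coord (i + 2) (A s) * b.coord (i + 1) (F s)) :
    ∀ s ∈ U, A s ∈ Submodule.span 𝕜 {b (i + 1), b (i + 2)} ∧
      b i ∈ Submodule.span 𝕜 {A s, F s} := by
  intro s hs
  have hA := analyticOnNhd_dual_apply h.analytic
  have hF := analyticOnNhd_dual_apply h.analytic_field
  have hcross : b.coord (i + 1) (A s) * b.coord (i + 2) (F s) =
      b.coord (i + 2) (A s) * b.coord (i + 1) (F s) :=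
    (((hA _).mul (hF _)).eqOn_of_preconnected_of_frequently_eq ((hA _).mul (hF _)) hU hs₀ hfreq) hs
  have hcases : ∀ i j : Fin 3, j ≠ i → j = i + 1 ∨ j = i + 2 := by decide
  refine ⟨mem_span_pair_of_coord_eq_zero b (h.mem_line s hs),
    mem_span_pair_of_coord_mul_eq b ((h.immersed s hs).ne_zero 0) (h.mem_line s hs)
      (h.field_ne s hs) fun j k hj hk => ?_⟩
  rcases hcases i j hj with rfl | rfl <;> rcases hcases i k hk with rfl | rfl
  exacts [rfl, hcross, hcross.symm, rfl]

end IsFramedLineCurve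

end Curves

section Families

variable {𝕜 V : Type*} [NontriviallyNormedField 𝕜] [NormedAddCommGroup V] [NormedSpace 𝕜 V]

/-- A two-parameter family of triangular reflective orbits on three framed curves lying in the lines
`nᵢ = 0`: for every `z = (s, u)` in `Ω`, the triangle with vertices `A s`, `B u` and `C (g z)`. -/
structure ReflectiveFamily (n₁ n₂ n₃ : Dual 𝕜 V) (A F B G C H : 𝕜 → V) (U₁ U₂ U₃ : Set 𝕜)
    (Ω : Set (𝕜 × 𝕜)) (g : 𝕜 × 𝕜 → 𝕜) : Prop where
  fst : IsFramedLineCurve n₁ A F U₁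
  snd : IsFramedLineCurve n₂ B G U₂
  trd : IsFramedLineCurve n₃ C H U₃
  isOpen : IsOpen Ω
  subset : Ω ⊆ U₁ ×ˢ U₂
  continuousOn : ContinuousOn g Ω
  mapsTo : Set.MapsTo g Ω U₃
  triangle : ∀ z ∈ Ω,
    ReflectiveTriangle n₁ n₂ n₃ (A z.1) (F z.1) (B z.2) (G z.2) (C (g z)) (H (g z))

namespace ReflectiveFamily

variable {n₁ n₂ n₃ : Dual 𝕜 V} {A F B G C H : 𝕜 → V} {U₁ U₂ U₃ : Set 𝕜} {Ω : Set (𝕜 × 𝕜)}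
  {g : 𝕜 × 𝕜 → 𝕜}

variable [CompleteSpace 𝕜] [FiniteDimensional 𝕜 V]

theorem linearIndependent [NeZero (2 : 𝕜)] (h : ReflectiveFamily n₁ n₂ n₃ A F B G C H U₁ U₂ U₃ Ω g)
    (hΩ : Ω.Nonempty) (hV : finrank 𝕜 V = 3) : LinearIndependent 𝕜 ![n₁, n₂, n₃] := by
  by_contra hn
  obtain ⟨p₀, hp₀⟩ := hΩ
  have hT := h.triangle p₀ hp₀
  obtain ⟨c₁, c₂, c₃, h₁, h₂, h₃, hrel⟩ := hT.exists_relation hn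
  obtain ⟨m, hm₁₂, hm₂₃, hm₃₁⟩ := hT.exists_dual_joint_kers_eq_zero hV h₁ h₂ hrel
  obtain ⟨dx, hdx, hx⟩ := h.fst.exists_hasStrictDerivAt_div (p := m) (q := c₂ • n₂)
    (fun X k₁ km k₂ => hm₁₂ X k₁ (by simpa [h₂] using k₂) km) (h.subset hp₀).1
    (by simpa [h₂] using hT.snd.right_ne)
  obtain ⟨dy, hdy, hy⟩ := h.snd.exists_hasStrictDerivAt_div (p := m) (q := c₃ • n₃)
    (fun X k₂ km k₃ => hm₂₃ X k₂ (by simpa [h₃] using k₃) km) (h.subset hp₀).2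
    (by simpa [h₃] using hT.trd.right_ne)
  obtain ⟨dz, hdz, hz⟩ := h.trd.exists_hasStrictDerivAt_div (p := m) (q := c₁ • n₁)
    (fun X k₃ km k₁ => hm₃₁ X k₃ (by simpa [h₁] using k₁) km) (h.mapsTo hp₀)
    (by simpa [h₁] using hT.fst.right_ne)
  have hnear : ∀ᶠ p in 𝓝 p₀, p ∈ Ω := h.isOpen.eventually_mem hp₀
  exact false_of_separated_sums
    (φ := fun s => 2 * pencilSlope n₁ n₂ m (A s) (F s) / c₁)
    (ψ := fun u => 2 * pencilSlope n₂ n₃ m (B u) (G u) / c₂)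
    (χ := fun t => 2 * pencilSlope n₃ n₁ m (C t) (H t) / c₃) hx hdx hy hdy hz hdz
    (h.continuousOn.continuousAt (h.isOpen.mem_nhds hp₀))
    (hnear.mono fun p hp => (h.triangle p hp).sum_of_relation m h₁ h₂ h₃ hrel)
    (hnear.mono fun p hp => (h.triangle p hp).rotate.sum_of_relation m h₂ h₃ h₁
      fun X => by linear_combination hrel X)
    (hnear.mono fun p hp => (h.triangle p hp).rotate.rotate.sum_of_relation m h₃ h₁ h₂
      fun X => by linear_combination hrel X)

theorem cevaProduct_eq_one (h : ReflectiveFamily n₁ n₂ n₃ A F B G C H U₁ U₂ U₃ Ω g)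
    (hker : ∀ X, n₁ X = 0 → n₂ X = 0 → n₃ X = 0 → X = 0) {z : 𝕜 × 𝕜} (hz : z ∈ Ω) :
    cevaProduct n₁ n₂ n₃ (A z.1) (B z.2) (C (g z)) = 1 := by
  obtain ⟨S, hS, T, hT, hST⟩ := mem_nhds_prod_iff.1 (h.isOpen.mem_nhds hz)
  have htri := fun (s : S) (u : T) => h.triangle (s, u) (hST ⟨s.2, u.2⟩)
  obtain ⟨_, hdx, hx⟩ := h.fst.exists_hasStrictDerivAt_div (p := n₃) (q := n₂)
    (fun X k₁ k₃ k₂ => hker X k₁ k₂ k₃) (h.subset hz).1 (h.triangle z hz).snd.right_ne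
  obtain ⟨_, hdy, hy⟩ := h.snd.exists_hasStrictDerivAt_div (p := n₁) (q := n₃)
    (fun X k₂ k₁ k₃ => hker X k₁ k₂ k₃) (h.subset hz).2 (h.triangle z hz).trd.right_ne
  obtain ⟨s, hsx, hsS⟩ :=
    ((hx.hasDerivAt.eventually_ne hdx).and (mem_nhdsWithin_of_mem_nhds hS)).exists
  obtain ⟨u, huy, huT⟩ :=
    ((hy.hasDerivAt.eventually_ne hdy).and (mem_nhdsWithin_of_mem_nhds hT)).exists
  let s₀ : S := ⟨z.1, mem_of_mem_nhds hS⟩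
  let u₀ : T := ⟨z.2, mem_of_mem_nhds hT⟩
  exact mul_mul_eq_one_of_separated (m := fun s : S => 2 * pencilSlope n₁ n₂ n₃ (A s) (F s))
    (k := fun u : T => 2 * pencilSlope n₂ n₃ n₁ (B u) (G u))
    (i := s₀) (i' := ⟨s, hsS⟩) (j := u₀) (j' := ⟨u, huT⟩)
    (x := fun s : S => n₃ (A s) / n₂ (A s)) (y := fun u : T => n₁ (B u) / n₃ (B u))
    (z := fun s u => n₂ (C (g (s, u))) / n₁ (C (g (s, u))))
    (fun s => div_ne_zero (htri s u₀).trd.left_ne (htri s u₀).snd.right_ne)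
    (fun u => div_ne_zero (htri s₀ u).fst.left_ne (htri s₀ u).trd.right_ne)
    (fun s u => div_ne_zero (htri s u).snd.left_ne (htri s u).fst.right_ne)
    (fun s u => (htri s u).one_sub_cevaProduct)
    (fun s u => by
      have := (htri s u).rotate.one_sub_cevaProduct
      rwa [ReflectiveTriangle.cevaProduct_rotate] at this)
    hsx huy

theorem tendsto_nhdsNE (h : ReflectiveFamily n₁ n₂ n₃ A F B G C H U₁ U₂ U₃ Ω g)
    (hker : ∀ X, n₁ X = 0 → n₂ X = 0 → n₃ X = 0 → X = 0) {z : 𝕜 × 𝕜} (hz : z ∈ Ω) :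
    Tendsto (fun s => g (s, z.2)) (𝓝[≠] z.1) (𝓝[≠] g z) := by
  have hline : Tendsto (fun s => (s, z.2)) (𝓝[≠] z.1) (𝓝 z) :=
    ((Continuous.prodMk_left z.2).tendsto z.1).mono_left nhdsWithin_le_nhds
  refine tendsto_nhdsWithin_iff.2
    ⟨(h.continuousOn.continuousAt (h.isOpen.mem_nhds hz)).tendsto.comp hline, ?_⟩
  have hT := h.triangle z hz
  obtain ⟨_, hd, hx⟩ := h.fst.exists_hasStrictDerivAt_div (p := n₃) (q := n₂)
    (fun X k₁ k₃ k₂ => hker X k₁ k₂ k₃) (h.subset hz).1 hT.snd.right_ne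
  filter_upwards [hx.hasDerivAt.eventually_ne (c := n₃ (A z.1) / n₂ (A z.1)) hd,
    hline.eventually (h.isOpen.mem_nhds hz)] with s hne hs hgs
  have hceva : cevaProduct n₁ n₂ n₃ (A s) (B z.2) (C (g (s, z.2))) =
      cevaProduct n₁ n₂ n₃ (A z.1) (B z.2) (C (g z)) :=
    (h.cevaProduct_eq_one hker hs).trans (h.cevaProduct_eq_one hker hz).symm
  rw [Set.mem_singleton_iff.1 hgs] at hceva
  exact hne (mul_right_cancel₀ (div_ne_zero hT.fst.left_ne hT.trd.right_ne)
    (mul_right_cancel₀ (div_ne_zero hT.snd.left_ne hT.fst.right_ne) hceva))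

theorem forall_mem_span [NeZero (2 : 𝕜)] {b : Basis (Fin 3) 𝕜 V}
    (h : ReflectiveFamily (b.coord 0) (b.coord 1) (b.coord 2) A F B G C H U₁ U₂ U₃ Ω g)
    (hΩ : Ω.Nonempty) (hU₁ : IsPreconnected U₁) (hU₂ : IsPreconnected U₂)
    (hU₃ : IsPreconnected U₃) :
    (∀ s ∈ U₁, A s ∈ Submodule.span 𝕜 {b 1, b 2} ∧ b 0 ∈ Submodule.span 𝕜 {A s, F s}) ∧
      (∀ u ∈ U₂, B u ∈ Submodule.span 𝕜 {b 2, b 0} ∧ b 1 ∈ Submodule.span 𝕜 {B u, G u}) ∧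
      (∀ t ∈ U₃, C t ∈ Submodule.span 𝕜 {b 0, b 1} ∧ b 2 ∈ Submodule.span 𝕜 {C t, H t}) := by
  obtain ⟨z, hz⟩ := hΩ
  have hker : ∀ X, b.coord 0 X = 0 → b.coord 1 X = 0 → b.coord 2 X = 0 → X = 0 :=
    fun X h₀ h₁ h₂ => b.forall_coord_eq_zero_iff.1
      (Fin.forall_fin_succ.2 ⟨h₀, Fin.forall_fin_two.2 ⟨h₁, h₂⟩⟩)
  have hnear := h.isOpen.mem_nhds hz
  have hs : ∀ᶠ s in 𝓝[≠] z.1, (s, z.2) ∈ Ω :=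
    (((Continuous.prodMk_left z.2).tendsto z.1).eventually hnear).filter_mono nhdsWithin_le_nhds
  have hu : ∀ᶠ u in 𝓝[≠] z.2, (z.1, u) ∈ Ω :=
    (((Continuous.prodMk_right z.1).tendsto z.2).eventually hnear).filter_mono nhdsWithin_le_nhds
  refine ⟨h.fst.mem_span_of_frequently hU₁ (h.subset hz).1 (hs.mono fun s hs => ?_).frequently,
    h.snd.mem_span_of_frequently hU₂ (h.subset hz).2 (hu.mono fun u hu => ?_).frequently,
    h.trd.mem_span_of_frequently hU₃ (h.mapsTo hz)
      ((h.tendsto_nhdsNE hker hz).frequently (hs.mono fun s hs => ?_).frequently)⟩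
  · exact (h.triangle _ hs).mul_eq_mul_of_cevaProduct_eq_one (h.cevaProduct_eq_one hker hs)
  · exact (h.triangle _ hu).rotate.mul_eq_mul_of_cevaProduct_eq_one
      (ReflectiveTriangle.cevaProduct_rotate.trans (h.cevaProduct_eq_one hker hu))
  · exact (h.triangle _ hs).rotate.rotate.mul_eq_mul_of_cevaProduct_eq_one
      (ReflectiveTriangle.cevaProduct_rotate.trans
        (ReflectiveTriangle.cevaProduct_rotate.trans (h.cevaProduct_eq_one hker hs)))

theorem exists_linearIndependent_forall_mem_span [NeZero (2 : 𝕜)]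
    (h : ReflectiveFamily n₁ n₂ n₃ A F B G C H U₁ U₂ U₃ Ω g) (hΩ : Ω.Nonempty)
    (hV : finrank 𝕜 V = 3) (hU₁ : IsPreconnected U₁) (hU₂ : IsPreconnected U₂)
    (hU₃ : IsPreconnected U₃) :
    ∃ P Q R : V, LinearIndependent 𝕜 ![P, Q, R] ∧
      (∀ s ∈ U₁, A s ∈ Submodule.span 𝕜 {P, Q} ∧ R ∈ Submodule.span 𝕜 {A s, F s}) ∧
      (∀ u ∈ U₂, B u ∈ Submodule.span 𝕜 {Q, R} ∧ P ∈ Submodule.span 𝕜 {B u, G u}) ∧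
      (∀ t ∈ U₃, C t ∈ Submodule.span 𝕜 {R, P} ∧ Q ∈ Submodule.span 𝕜 {C t, H t}) := by
  obtain ⟨b, hb⟩ := exists_basis_coord_eq (h.linearIndependent hΩ hV) hV.symm
  obtain ⟨rfl, rfl, rfl⟩ : b.coord 0 = n₁ ∧ b.coord 1 = n₂ ∧ b.coord 2 = n₃ :=
    ⟨hb 0, hb 1, hb 2⟩
  have hcycle : ![b 1, b 2, b 0] = b ∘ (· + 1) := by
    funext i
    fin_cases i <;> rfl
  refine ⟨b 1, b 2, b 0, ?_, h.forall_mem_span hΩ hU₁ hU₂ hU₃⟩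
  rw [hcycle]
  exact b.linearIndependent.comp _ (add_left_injective 1)

end ReflectiveFamily

end Families

section AffinePlane

section Field

variable {𝕜 : Type*} [Field 𝕜]

theorem PlaneSym.div_add_div {v τ u w : 𝕜 × 𝕜} (h : PlaneSym 𝕜 v τ u w) {ν : Dual 𝕜 (𝕜 × 𝕜)}
    (hτ : ν τ = 0) (hv : ν v ≠ 0) (hu : ν u ≠ 0) (e : Dual 𝕜 (𝕜 × 𝕜)) :
    e u / ν u + e w / ν w = 2 * (e v / ν v) := by
  obtain ⟨p, q, hp, hq, hsum, hdiff⟩ := h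
  obtain ⟨c, hc⟩ := Submodule.mem_span_singleton.1 hsum
  obtain ⟨d, hd⟩ := Submodule.mem_span_singleton.1 hdiff
  have hνsum : p * ν u + q * ν w = 0 := by simpa [hτ] using (congrArg ν hc).symm
  have hνdiff : p * ν u - q * ν w = d * ν v := by simpa using (congrArg ν hd).symm
  have hediff : p * e u - q * e w = d * e v := by simpa using (congrArg e hd).symm
  have hw' : ν w = -(p * ν u) / q := by
    rw [eq_div_iff hq]
    linear_combination hνsum
  have hd' : d = 2 * (p * ν u) / ν v := by
    rw [eq_div_iff hv]
    linear_combination -hνsum - hνdiff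
  rw [hd'] at hediff
  rw [hw']
  field_simp at hediff ⊢
  linear_combination hediff

theorem mem_span_singleton_of_mul_eq_mul {τ u : 𝕜 × 𝕜} (hτ : τ ≠ 0)
    (h : τ.1 * u.2 = τ.2 * u.1) : u ∈ Submodule.span 𝕜 {τ} := by
  rw [Submodule.mem_span_singleton]
  by_cases h₁ : τ.1 = 0
  · have h₂ : τ.2 ≠ 0 := fun h₂ => hτ (Prod.ext h₁ h₂)
    exact ⟨u.2 / τ.2, Prod.ext (by simpa [h₁, h₂, eq_comm] using h) (div_mul_cancel₀ _ h₂)⟩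
  · refine ⟨u.1 / τ.1, Prod.ext (div_mul_cancel₀ _ h₁) ?_⟩
    simp only [Prod.smul_snd, smul_eq_mul]
    field_simp
    linear_combination -h

/-- `liftDir` as a linear map, along which linear forms on `𝕜³` are restricted to directions. -/
def liftDirₗ (𝕜 : Type*) [Field 𝕜] : 𝕜 × 𝕜 →ₗ[𝕜] 𝕜 × 𝕜 × 𝕜 where
  toFun := liftDir 𝕜
  map_add' x y := by simp [liftDir]
  map_smul' c x := by simp [liftDir]

theorem liftPt_sub_liftPt (x y : 𝕜 × 𝕜) : liftPt 𝕜 y - liftPt 𝕜 x = liftDir 𝕜 (y - x) := by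
  simp [liftPt, liftDir]

/-- The linear form on `𝕜³` vanishing on the homogeneous coordinates of the points of
`lineThru 𝕜 x w`, i.e. the determinant of `(x, 1)`, `(w, 0)` and the argument, up to sign. -/
def lineForm (x w : 𝕜 × 𝕜) : Dual 𝕜 (𝕜 × 𝕜 × 𝕜) :=
  w.1 • LinearMap.fst 𝕜 𝕜 𝕜 ∘ₗ LinearMap.snd 𝕜 𝕜 (𝕜 × 𝕜) - w.2 • LinearMap.fst 𝕜 𝕜 (𝕜 × 𝕜) +
    (w.2 * x.1 - w.1 * x.2) • LinearMap.snd 𝕜 𝕜 𝕜 ∘ₗ LinearMap.snd 𝕜 𝕜 (𝕜 × 𝕜)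

theorem lineForm_liftPt {x w y : 𝕜 × 𝕜} (hy : y ∈ lineThru 𝕜 x w) :
    lineForm x w (liftPt 𝕜 y) = 0 := by
  obtain ⟨c, rfl⟩ := hy
  simp only [lineForm, liftPt, Prod.fst_add, Prod.snd_add, Prod.smul_fst, Prod.smul_snd,
    smul_eq_mul, LinearMap.add_apply, LinearMap.sub_apply, LinearMap.smul_apply,
    LinearMap.coe_comp, LinearMap.coe_fst, LinearMap.coe_snd, Function.comp_apply,
    LinearMap.fst_apply, mul_one]
  ring

theorem lineForm_liftDir (x w u : 𝕜 × 𝕜) :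
    lineForm x w (liftDir 𝕜 u) = w.1 * u.2 - w.2 * u.1 := by
  simp [lineForm, liftDir]

theorem lineForm_liftDir_ne_zero {x w τ u : 𝕜 × 𝕜} (hw : w ≠ 0) (hτ : τ ≠ 0)
    (hτw : lineForm x w (liftDir 𝕜 τ) = 0) (hu : u ∉ Submodule.span 𝕜 {τ}) :
    lineForm x w (liftDir 𝕜 u) ≠ 0 := by
  intro huw
  rw [lineForm_liftDir, sub_eq_zero] at hτw huw
  obtain ⟨c, rfl⟩ := Submodule.mem_span_singleton.1 (mem_span_singleton_of_mul_eq_mul hw hτw)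
  refine hu (mem_span_singleton_of_mul_eq_mul hτ ?_)
  simp only [Prod.smul_fst, Prod.smul_snd, smul_eq_mul]
  linear_combination c * huw

theorem linearIndependent_liftPt_liftDir (x : 𝕜 × 𝕜) {τ : 𝕜 × 𝕜} (hτ : τ ≠ 0) :
    LinearIndependent 𝕜 ![liftPt 𝕜 x, liftDir 𝕜 τ] := by
  refine LinearIndependent.pair_iff.2 fun s t hst => ?_
  obtain rfl : s = 0 := by simpa [liftPt, liftDir] using congrArg (fun X => X.2.2) hst
  have ht : t • τ = 0 := Prod.ext (by simpa [liftDir] using congrArg Prod.fst hst)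
    (by simpa [liftDir] using congrArg (fun X => X.2.1) hst)
  exact ⟨rfl, (smul_eq_zero.1 ht).resolve_right hτ⟩

/-- The reflection law of a billiard with field direction `v` and tangent direction `τ` at the
vertex `A`, for the sides `AB` and `AC`, neither of which is tangent to the border. -/
structure ReflectsAt (v τ A B C : 𝕜 × 𝕜) : Prop where
  left_notMem : B - A ∉ Submodule.span 𝕜 {τ}
  right_notMem : C - A ∉ Submodule.span 𝕜 {τ}
  planeSym : PlaneSym 𝕜 v τ (B - A) (C - A)

theorem ReflectsAt.harmonicAt {v τ A B C x w : 𝕜 × 𝕜} (h : ReflectsAt v τ A B C) (hw : w ≠ 0)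
    (hτ : τ ≠ 0) (hτw : lineForm x w (liftDir 𝕜 τ) = 0) (hv : v ∉ Submodule.span 𝕜 {τ})
    (hA : lineForm x w (liftPt 𝕜 A) = 0) :
    HarmonicAt (lineForm x w) (liftPt 𝕜 A) (liftDir 𝕜 v) (liftPt 𝕜 B) (liftPt 𝕜 C) := by
  have hlift : ∀ {e : Dual 𝕜 (𝕜 × 𝕜 × 𝕜)}, e (liftPt 𝕜 A) = 0 →
      ∀ y, e (liftPt 𝕜 y) = e (liftDir 𝕜 (y - A)) := fun he y => by
    rw [← liftPt_sub_liftPt, map_sub, he, sub_zero]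
  have hne := fun {u} => lineForm_liftDir_ne_zero (x := x) (u := u) hw hτ hτw
  refine ⟨hA, hne hv, ?_, ?_, fun e he => ?_⟩
  · rw [hlift hA]
    exact hne h.left_notMem
  · rw [hlift hA]
    exact hne h.right_notMem
  · rw [hlift hA, hlift hA, hlift he, hlift he]
    exact h.planeSym.div_add_div (ν := lineForm x w ∘ₗ liftDirₗ 𝕜) hτw (hne hv)
      (hne h.left_notMem) (e ∘ₗ liftDirₗ 𝕜)

end Field

variable {𝕜 : Type*} [NontriviallyNormedField 𝕜]

/-- An immersed analytic line-framed curve `(a, v)` on the open set `U`, contained in the affine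
line `lineThru 𝕜 x w`. -/
structure IsFramedCurveOnLine (a v : 𝕜 → 𝕜 × 𝕜) (U : Set 𝕜) (x w : 𝕜 × 𝕜) : Prop where
  isOpen : IsOpen U
  analytic : AnalyticOnNhd 𝕜 a U
  analytic_field : AnalyticOnNhd 𝕜 v U
  deriv_ne_zero : ∀ s ∈ U, deriv a s ≠ 0
  field_notMem : ∀ s ∈ U, v s ∉ Submodule.span 𝕜 {deriv a s}
  dir_ne_zero : w ≠ 0
  mem_line : ∀ s ∈ U, a s ∈ lineThru 𝕜 x w

theorem hasDerivAt_liftPt {a : 𝕜 → 𝕜 × 𝕜} {a' : 𝕜 × 𝕜} {s : 𝕜} (h : HasDerivAt a a' s) :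
    HasDerivAt (fun s => liftPt 𝕜 (a s)) (liftDir 𝕜 a') s :=
  (hasFDerivAt_fst.comp_hasDerivAt s h).prodMk
    ((hasFDerivAt_snd.comp_hasDerivAt s h).prodMk (hasDerivAt_const s 1))

namespace IsFramedCurveOnLine

variable {a v : 𝕜 → 𝕜 × 𝕜} {U : Set 𝕜} {x w : 𝕜 × 𝕜}

theorem deriv_liftPt (h : IsFramedCurveOnLine a v U x w) {s : 𝕜} (hs : s ∈ U) :
    deriv (fun s => liftPt 𝕜 (a s)) s = liftDir 𝕜 (deriv a s) :=
  (hasDerivAt_liftPt (h.analytic s hs).differentiableAt.hasDerivAt).deriv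

theorem analyticOnNhd_liftPt (h : IsFramedCurveOnLine a v U x w) :
    AnalyticOnNhd 𝕜 (fun s => liftPt 𝕜 (a s)) U := fun s hs =>
  (analyticAt_fst.comp (h.analytic s hs)).prod
    ((analyticAt_snd.comp (h.analytic s hs)).prod analyticAt_const)

theorem lineForm_liftDir_deriv [CompleteSpace 𝕜] (h : IsFramedCurveOnLine a v U x w) {s : 𝕜}
    (hs : s ∈ U) : lineForm x w (liftDir 𝕜 (deriv a s)) = 0 := by
  rw [← h.deriv_liftPt hs]
  exact dual_apply_deriv_eq_zero h.isOpen h.analyticOnNhd_liftPt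
    (fun s hs => lineForm_liftPt (h.mem_line s hs)) hs

theorem isFramedLineCurve [CompleteSpace 𝕜] (h : IsFramedCurveOnLine a v U x w) :
    IsFramedLineCurve (lineForm x w) (fun s => liftPt 𝕜 (a s)) (fun s => liftDir 𝕜 (v s)) U where
  isOpen := h.isOpen
  analytic := h.analyticOnNhd_liftPt
  analytic_field := fun s hs => (analyticAt_fst.comp (h.analytic_field s hs)).prod
    ((analyticAt_snd.comp (h.analytic_field s hs)).prod analyticAt_const)
  mem_line := fun s hs => lineForm_liftPt (h.mem_line s hs)
  field_ne := fun s hs => lineForm_liftDir_ne_zero h.dir_ne_zero (h.deriv_ne_zero s hs)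
    (h.lineForm_liftDir_deriv hs) (h.field_notMem s hs)
  immersed := fun s hs => by
    rw [h.deriv_liftPt hs]
    exact linearIndependent_liftPt_liftDir (a s) (h.deriv_ne_zero s hs)

theorem harmonicAt [CompleteSpace 𝕜] (h : IsFramedCurveOnLine a v U x w) {s : 𝕜} (hs : s ∈ U)
    {B C : 𝕜 × 𝕜} (hr : ReflectsAt (v s) (deriv a s) (a s) B C) :
    HarmonicAt (lineForm x w) (liftPt 𝕜 (a s)) (liftDir 𝕜 (v s)) (liftPt 𝕜 B) (liftPt 𝕜 C) :=
  hr.harmonicAt h.dir_ne_zero (h.deriv_ne_zero s hs) (h.lineForm_liftDir_deriv hs)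
    (h.field_notMem s hs) (lineForm_liftPt (h.mem_line s hs))

end IsFramedCurveOnLine

end AffinePlane

theorem three_reflective_on_lines_is_right_spherical_general {𝕜 : Type*} [RCLike 𝕜]
    {U₁ U₂ U₃ : Set 𝕜} {a₁ a₂ a₃ v₁ v₂ v₃ : 𝕜 → 𝕜 × 𝕜} {x₁ w₁ x₂ w₂ x₃ w₃ : 𝕜 × 𝕜}
    (h₁ : IsFramedCurveOnLine a₁ v₁ U₁ x₁ w₁) (h₂ : IsFramedCurveOnLine a₂ v₂ U₂ x₂ w₂)
    (h₃ : IsFramedCurveOnLine a₃ v₃ U₃ x₃ w₃) (hU₁ : IsPreconnected U₁)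
    (hU₂ : IsPreconnected U₂) (hU₃ : IsPreconnected U₃) {Ω : Set (𝕜 × 𝕜)} {g : 𝕜 × 𝕜 → 𝕜}
    (hΩo : IsOpen Ω) (hΩne : Ω.Nonempty) (hΩ : Ω ⊆ U₁ ×ˢ U₂) (hg : ContinuousOn g Ω)
    (hgm : Set.MapsTo g Ω U₃)
    (hr₁ : ∀ z ∈ Ω, ReflectsAt (v₁ z.1) (deriv a₁ z.1) (a₁ z.1) (a₂ z.2) (a₃ (g z)))
    (hr₂ : ∀ z ∈ Ω, ReflectsAt (v₂ z.2) (deriv a₂ z.2) (a₂ z.2) (a₁ z.1) (a₃ (g z)))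
    (hr₃ : ∀ z ∈ Ω, ReflectsAt (v₃ (g z)) (deriv a₃ (g z)) (a₃ (g z)) (a₁ z.1) (a₂ z.2)) :
    ∃ P Q R : 𝕜 × 𝕜 × 𝕜, LinearIndependent 𝕜 ![P, Q, R] ∧
      (∀ s ∈ U₁, liftPt 𝕜 (a₁ s) ∈ Submodule.span 𝕜 {P, Q} ∧
        R ∈ Submodule.span 𝕜 {liftPt 𝕜 (a₁ s), liftDir 𝕜 (v₁ s)}) ∧
      (∀ u ∈ U₂, liftPt 𝕜 (a₂ u) ∈ Submodule.span 𝕜 {Q, R} ∧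
        P ∈ Submodule.span 𝕜 {liftPt 𝕜 (a₂ u), liftDir 𝕜 (v₂ u)}) ∧
      (∀ t ∈ U₃, liftPt 𝕜 (a₃ t) ∈ Submodule.span 𝕜 {R, P} ∧
        Q ∈ Submodule.span 𝕜 {liftPt 𝕜 (a₃ t), liftDir 𝕜 (v₃ t)}) := by
  have hfam : ReflectiveFamily (lineForm x₁ w₁) (lineForm x₂ w₂) (lineForm x₃ w₃)
      (fun s => liftPt 𝕜 (a₁ s)) (fun s => liftDir 𝕜 (v₁ s)) (fun u => liftPt 𝕜 (a₂ u))
      (fun u => liftDir 𝕜 (v₂ u)) (fun t => liftPt 𝕜 (a₃ t)) (fun t => liftDir 𝕜 (v₃ t))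
      U₁ U₂ U₃ Ω g :=
    ⟨h₁.isFramedLineCurve, h₂.isFramedLineCurve, h₃.isFramedLineCurve, hΩo, hΩ, hg, hgm,
      fun z hz => ⟨h₁.harmonicAt (hΩ hz).1 (hr₁ z hz), (h₂.harmonicAt (hΩ hz).2 (hr₂ z hz)).symm,
        h₃.harmonicAt (hgm hz) (hr₃ z hz)⟩⟩
  exact hfam.exists_linearIndependent_forall_mem_span hΩne (by simp) hU₁ hU₂ hU₃

/-- **Proposition 3.5.** A 3-reflective triple of complex analytic line-framed curves in `ℂ²`
whose classical borders are supported by pairwise distinct lines is right-spherical. -/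
theorem three_reflective_on_lines_is_right_spherical
    (U₁ U₂ U₃ : Set ℂ) (a₁ a₂ a₃ v₁ v₂ v₃ : ℂ → ℂ × ℂ)
    (hU₁o : IsOpen U₁) (hU₂o : IsOpen U₂) (hU₃o : IsOpen U₃)
    (hU₁c : IsConnected U₁) (hU₂c : IsConnected U₂) (hU₃c : IsConnected U₃)
    -- the `(aᵢ, vᵢ)` are complex analytic line-framed curves
    (ha₁ : AnalyticOnNhd ℂ a₁ U₁) (ha₂ : AnalyticOnNhd ℂ a₂ U₂)
    (ha₃ : AnalyticOnNhd ℂ a₃ U₃)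
    (ha₁i : Set.InjOn a₁ U₁) (ha₂i : Set.InjOn a₂ U₂) (ha₃i : Set.InjOn a₃ U₃)
    (ha₁' : ∀ s ∈ U₁, deriv a₁ s ≠ 0) (ha₂' : ∀ u ∈ U₂, deriv a₂ u ≠ 0)
    (ha₃' : ∀ t ∈ U₃, deriv a₃ t ≠ 0)
    (hv₁ : AnalyticOnNhd ℂ v₁ U₁) (hv₂ : AnalyticOnNhd ℂ v₂ U₂)
    (hv₃ : AnalyticOnNhd ℂ v₃ U₃)
    (hv₁t : ∀ s ∈ U₁, v₁ s ∉ Submodule.span ℂ {deriv a₁ s})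
    (hv₂t : ∀ u ∈ U₂, v₂ u ∉ Submodule.span ℂ {deriv a₂ u})
    (hv₃t : ∀ t ∈ U₃, v₃ t ∉ Submodule.span ℂ {deriv a₃ t})
    -- the classical borders are supported by pairwise distinct lines ℓ₁, ℓ₂, ℓ₃
    (x₁ w₁ x₂ w₂ x₃ w₃ : ℂ × ℂ)
    (hw₁ : w₁ ≠ 0) (hw₂ : w₂ ≠ 0) (hw₃ : w₃ ≠ 0)
    (hl₁ : ∀ s ∈ U₁, a₁ s ∈ lineThru ℂ x₁ w₁)
    (hl₂ : ∀ u ∈ U₂, a₂ u ∈ lineThru ℂ x₂ w₂)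
    (hl₃ : ∀ t ∈ U₃, a₃ t ∈ lineThru ℂ x₃ w₃)
    (hl₁₂ : lineThru ℂ x₁ w₁ ≠ lineThru ℂ x₂ w₂)
    (hl₂₃ : lineThru ℂ x₂ w₂ ≠ lineThru ℂ x₃ w₃)
    (hl₃₁ : lineThru ℂ x₃ w₃ ≠ lineThru ℂ x₁ w₁)
    -- 3-reflectivity data (Ω, g)
    (Ω : Set (ℂ × ℂ)) (g : ℂ × ℂ → ℂ)
    (hΩo : IsOpen Ω) (hΩne : Ω.Nonempty) (hΩ : Ω ⊆ U₁ ×ˢ U₂)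
    (hg : ContinuousOn g Ω) (hgm : ∀ z ∈ Ω, g z ∈ U₃)
    (hcol : ∀ z ∈ Ω, ¬ Collinear ℂ {a₁ z.1, a₂ z.2, a₃ (g z)})
    (htan₁ : ∀ z ∈ Ω, a₂ z.2 - a₁ z.1 ∉ Submodule.span ℂ {deriv a₁ z.1} ∧
      a₃ (g z) - a₁ z.1 ∉ Submodule.span ℂ {deriv a₁ z.1})
    (htan₂ : ∀ z ∈ Ω, a₁ z.1 - a₂ z.2 ∉ Submodule.span ℂ {deriv a₂ z.2} ∧
      a₃ (g z) - a₂ z.2 ∉ Submodule.span ℂ {deriv a₂ z.2})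
    (htan₃ : ∀ z ∈ Ω, a₁ z.1 - a₃ (g z) ∉ Submodule.span ℂ {deriv a₃ (g z)} ∧
      a₂ z.2 - a₃ (g z) ∉ Submodule.span ℂ {deriv a₃ (g z)})
    (href₁ : ∀ z ∈ Ω,
      PlaneSym ℂ (v₁ z.1) (deriv a₁ z.1) (a₂ z.2 - a₁ z.1) (a₃ (g z) - a₁ z.1))
    (href₂ : ∀ z ∈ Ω,
      PlaneSym ℂ (v₂ z.2) (deriv a₂ z.2) (a₁ z.1 - a₂ z.2) (a₃ (g z) - a₂ z.2))
    (href₃ : ∀ z ∈ Ω,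
      PlaneSym ℂ (v₃ (g z)) (deriv a₃ (g z)) (a₁ z.1 - a₃ (g z)) (a₂ z.2 - a₃ (g z))) :
    ∃ P Q R : ℂ × ℂ × ℂ, LinearIndependent ℂ ![P, Q, R] ∧
      (∀ s ∈ U₁, liftPt ℂ (a₁ s) ∈ Submodule.span ℂ {P, Q} ∧
        R ∈ Submodule.span ℂ {liftPt ℂ (a₁ s), liftDir ℂ (v₁ s)}) ∧
      (∀ u ∈ U₂, liftPt ℂ (a₂ u) ∈ Submodule.span ℂ {Q, R} ∧
        P ∈ Submodule.span ℂ {liftPt ℂ (a₂ u), liftDir ℂ (v₂ u)}) ∧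
      (∀ t ∈ U₃, liftPt ℂ (a₃ t) ∈ Submodule.span ℂ {R, P} ∧
        Q ∈ Submodule.span ℂ {liftPt ℂ (a₃ t), liftDir ℂ (v₃ t)}) := by
  exact three_reflective_on_lines_is_right_spherical_general
    ⟨hU₁o, ha₁, hv₁, ha₁', hv₁t, hw₁, hl₁⟩ ⟨hU₂o, ha₂, hv₂, ha₂', hv₂t, hw₂, hl₂⟩
    ⟨hU₃o, ha₃, hv₃, ha₃', hv₃t, hw₃, hl₃⟩ hU₁c.isPreconnected hU₂c.isPreconnected
    hU₃c.isPreconnected hΩo hΩne hΩ hg hgm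
    (fun z hz => ⟨(htan₁ z hz).1, (htan₁ z hz).2, href₁ z hz⟩)
    (fun z hz => ⟨(htan₂ z hz).1, (htan₂ z hz).2, href₂ z hz⟩)
    (fun z hz => ⟨(htan₃ z hz).1, (htan₃ z hz).2, href₃ z hz⟩)
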